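/- Channel feedback does not help when both decision makers are causal (Theorem 2): The region R_{ed,f} of achievable cost pairs for control designs with causal encoder having strictly causal channel feedback and causal decoder is equal to the region R_ed of achievable cost pairs for control designs with causal encoder (no feedback) and causal decoder: R_{ed,f} = R_ed. -/

import Mathlib

/-!
Formalization of results from "Causal Vector-valued Witsenhausen Counterexamples with
Feedback" (Zhao, Le Treust, Oechtering).

Stochastic encoders/decoders (stochastic kernels) are realized as measurable functions of
independent i.i.d. randomization seeds, which is equivalent to the kernel formulation on
standard Borel spaces.
-/

open MeasureTheory ProbabilityTheory
open scoped ENNReal NNReal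

namespace Witsenhausen

noncomputable section

/-- A path (block of length `n`) of real values. -/
abbrev Path (n : ℕ) : Type := Fin n → ℝ

/-- i.i.d. centered Gaussian vector of length `n` and variance `v`. -/
def iidGaussian (n : ℕ) (v : ℝ≥0) : Measure (Path n) :=
  Measure.pi fun _ => gaussianReal 0 v

instance (n : ℕ) (v : ℝ≥0) : IsProbabilityMeasure (iidGaussian n v) := by
  unfold iidGaussian; infer_instance

/-- Canonical sample space: source `X₀ⁿ`, channel noise `Z₁ⁿ`, and the randomization seeds of
the (stochastic) encoder and decoder. -/
abbrev Sample (n : ℕ) : Type := Path n × Path n × Path n × Path n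

/-- The base randomness: the i.i.d. `N(0,Q)` source `X₀ⁿ`, the independent i.i.d. `N(0,N)`
channel noise `Z₁ⁿ`, and independent i.i.d. randomization seeds for the stochastic encoder
and decoder. -/
def base (n : ℕ) (Q N : ℝ≥0) : Measure (Sample n) :=
  (iidGaussian n Q).prod ((iidGaussian n N).prod
    ((iidGaussian n 1).prod (iidGaussian n 1)))

instance (n : ℕ) (Q N : ℝ≥0) : IsProbabilityMeasure (base n Q N) := by
  unfold base; infer_instance

/-- The source sequence `X₀ⁿ`. -/
def srcX0 {n : ℕ} (ω : Sample n) : Path n := ω.1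
/-- The channel noise sequence `Z₁ⁿ`. -/
def noiseZ {n : ℕ} (ω : Sample n) : Path n := ω.2.1
/-- The encoder randomization seeds. -/
def seedV {n : ℕ} (ω : Sample n) : Path n := ω.2.2.1
/-- The decoder randomization seeds. -/
def seedW {n : ℕ} (ω : Sample n) : Path n := ω.2.2.2

/-- The long-run input cost `c_P(u₁ⁿ) = (1/n) ∑_t u_{1,t}²`. -/
def costP {n : ℕ} (u : Path n) : ℝ := (1 / (n : ℝ)) * ∑ t, (u t) ^ 2

/-- The long-run estimation cost `c_S(x₁ⁿ, u₂ⁿ) = (1/n) ∑_t (x_{1,t} - u_{2,t})²`. -/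
def costS {n : ℕ} (x u : Path n) : ℝ := (1 / (n : ℝ)) * ∑ t, (x t - u t) ^ 2

/-- A control design with causal encoder and causal decoder: at each time `t` the stochastic
encoder `f^t` observes `X₀^t` and the stochastic decoder `g^t` observes `Y₁^t` (stochastic
maps are realized as measurable functions of independent randomization seeds). -/
structure Design (n : ℕ) where
  enc : Fin n → Path n → ℝ → ℝ
  dec : Fin n → Path n → ℝ → ℝ
  enc_meas : ∀ t, Measurable fun p : Path n × ℝ => enc t p.1 p.2
  dec_meas : ∀ t, Measurable fun p : Path n × ℝ => dec t p.1 p.2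
  /-- causal encoding: `U_{1,t}` depends on the source only through `X₀^t`. -/
  enc_causal : ∀ (t : Fin n) (x x' : Path n) (v : ℝ),
    (∀ s, s ≤ t → x s = x' s) → enc t x v = enc t x' v
  /-- causal decoding: `U_{2,t}` depends on the channel output only through `Y₁^t`. -/
  dec_causal : ∀ (t : Fin n) (y y' : Path n) (w : ℝ),
    (∀ s, s ≤ t → y s = y' s) → dec t y w = dec t y' w

namespace Design

variable {n : ℕ} (c : Design n)

/-- The control sequence `U₁ⁿ`. -/
def U1 (ω : Sample n) : Path n := fun t => c.enc t (srcX0 ω) (seedV ω t)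
/-- The interim state `X₁ⁿ = X₀ⁿ + U₁ⁿ`. -/
def X1 (ω : Sample n) : Path n := fun t => srcX0 ω t + c.U1 ω t
/-- The channel output `Y₁ⁿ = X₁ⁿ + Z₁ⁿ`. -/
def Y1 (ω : Sample n) : Path n := fun t => c.X1 ω t + noiseZ ω t
/-- The estimate sequence `U₂ⁿ`. -/
def U2 (ω : Sample n) : Path n := fun t => c.dec t (c.Y1 ω) (seedW ω t)

end Design

/-- `(P, S)` is an achievable pair of costs for causal encoding and causal decoding: for every
`ε > 0` there is `n₀` such that for every blocklength `n ≥ n₀` some control design makes the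
expected cost deviation `E[|P - c_P(U₁ⁿ)| + |S - c_S(X₁ⁿ, U₂ⁿ)|]` at most `ε`.
This defines the region `R_ed`. -/
def achievable (Q N : ℝ≥0) (P S : ℝ) : Prop :=
  ∀ ε > (0 : ℝ), ∃ n₀ : ℕ, ∀ n ≥ n₀, ∃ c : Design n,
    (∫⁻ ω, ENNReal.ofReal
        (|P - costP (c.U1 ω)| + |S - costS (c.X1 ω) (c.U2 ω)|) ∂(base n Q N))
      ≤ ENNReal.ofReal ε

/-- The control sequence generated recursively by a feedback encoder: at each time `t < n`,
`U_{1,t}` is produced from the source `x`, the past channel outputs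
`Y_{1,s} = X_{0,s} + U_{1,s} + Z_{1,s}` for `s < t` (the strict prefix, padded by `0`), and
the seed `v t`. -/
def fbCtrl {n : ℕ} (enc : Fin n → Path n → Path n → ℝ → ℝ)
    (x z v : Path n) (t : ℕ) : ℝ :=
  if ht : t < n then
    enc ⟨t, ht⟩ x
      (fun s : Fin n => if hs : (s : ℕ) < t then x s + fbCtrl enc x z v s + z s else 0)
      (v ⟨t, ht⟩)
  else 0
termination_by t
decreasing_by exact hs

/-- A control design with causal encoder with (strictly causal) channel feedback and causal
decoder: at time `t` the stochastic encoder `f^{f,t}` observes `(X₀^t, Y₁^{t-1})` and the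
stochastic decoder `g^t` observes `Y₁^t`. -/
structure FBDesign (n : ℕ) where
  enc : Fin n → Path n → Path n → ℝ → ℝ
  dec : Fin n → Path n → ℝ → ℝ
  enc_meas : ∀ t, Measurable fun p : (Path n × Path n) × ℝ => enc t p.1.1 p.1.2 p.2
  dec_meas : ∀ t, Measurable fun p : Path n × ℝ => dec t p.1 p.2
  /-- the encoder observes the source causally and the channel output strictly causally -/
  enc_causal : ∀ (t : Fin n) (x x' y y' : Path n) (v : ℝ),
    (∀ s, s ≤ t → x s = x' s) → (∀ s, s < t → y s = y' s) →
      enc t x y v = enc t x' y' v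
  /-- causal decoding -/
  dec_causal : ∀ (t : Fin n) (y y' : Path n) (w : ℝ),
    (∀ s, s ≤ t → y s = y' s) → dec t y w = dec t y' w

namespace FBDesign

variable {n : ℕ} (c : FBDesign n)

/-- The control sequence `U₁ⁿ` (defined recursively through the feedback loop). -/
def U1 (ω : Sample n) : Path n := fun t => fbCtrl c.enc (srcX0 ω) (noiseZ ω) (seedV ω) t
/-- The interim state `X₁ⁿ = X₀ⁿ + U₁ⁿ`. -/
def X1 (ω : Sample n) : Path n := fun t => srcX0 ω t + c.U1 ω t
/-- The channel output `Y₁ⁿ = X₁ⁿ + Z₁ⁿ`. -/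
def Y1 (ω : Sample n) : Path n := fun t => c.X1 ω t + noiseZ ω t
/-- The estimate sequence `U₂ⁿ`. -/
def U2 (ω : Sample n) : Path n := fun t => c.dec t (c.Y1 ω) (seedW ω t)

end FBDesign

/-- The region `R_{ed,f}`: achievable pairs of costs for causal encoding with channel feedback
and causal decoding. -/
def achievableFB (Q N : ℝ≥0) (P S : ℝ) : Prop :=
  ∀ ε > (0 : ℝ), ∃ n₀ : ℕ, ∀ n ≥ n₀, ∃ c : FBDesign n,
    (∫⁻ ω, ENNReal.ofReal
        (|P - costP (c.U1 ω)| + |S - costS (c.X1 ω) (c.U2 ω)|) ∂(base n Q N))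
      ≤ ENNReal.ofReal ε

/-- The law of large numbers in `L¹`, stated on the finite product spaces. -/
theorem tendsto_lintegral_abs_integral_sub_average {α : Type*} [MeasurableSpace α]
    (μ : Measure α) [IsProbabilityMeasure μ] {h : α → ℝ} (hm : Measurable h)
    (hi : Integrable h μ) :
    Filter.Tendsto (fun n : ℕ => ∫⁻ ω, ENNReal.ofReal
        |∫ a, h a ∂μ - (1 / (n : ℝ)) * ∑ t : Fin n, h (ω t)| ∂(Measure.pi fun _ : Fin n => μ))
      Filter.atTop (nhds 0) := by
  set M : Measure (ℕ → α) := Measure.infinitePi fun _ : ℕ => μ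
  have heval (i : ℕ) : MeasurePreserving (fun ω : ℕ → α => ω i) M μ :=
    measurePreserving_eval_infinitePi (fun _ : ℕ => μ) i
  have hindep : iIndepFun (fun (i : ℕ) (ω : ℕ → α) => h (ω i)) M :=
    iIndepFun_infinitePi (P := fun _ : ℕ => μ) (X := fun _ => h) fun _ => hm
  have hident (i : ℕ) :
      IdentDistrib (fun ω : ℕ → α => h (ω i)) (fun ω : ℕ → α => h (ω 0)) M M := by
    refine ⟨(hm.comp (heval i).measurable).aemeasurable,
      (hm.comp (heval 0).measurable).aemeasurable, ?_⟩
    have e (j : ℕ) : M.map (fun ω : ℕ → α => h (ω j)) = μ.map h := by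
      rw [← (heval j).map_eq, Measure.map_map hm (heval j).measurable]; rfl
    rw [e, e]
  have hmem : MemLp (fun ω : ℕ → α => h (ω 0)) 1 M :=
    memLp_one_iff_integrable.2 ((heval 0).integrable_comp_of_integrable hi)
  have hmean : ∫ ω, h (ω 0) ∂M = ∫ a, h a ∂μ := by
    conv_rhs => rw [← (heval 0).map_eq]
    rw [integral_map (heval 0).measurable.aemeasurable hm.aestronglyMeasurable]
  have key := strong_law_Lp le_rfl ENNReal.one_ne_top (fun (i : ℕ) (ω : ℕ → α) => h (ω i))
    hmem (fun i j hij => hindep.indepFun hij) hident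
  refine key.congr fun n => ?_
  have hrestr : MeasurePreserving (fun (ω : ℕ → α) (t : Fin n) => ω t) M
      (Measure.pi fun _ : Fin n => μ) := by
    refine ⟨by fun_prop, ?_⟩
    have hid : iIndepFun (fun (i : ℕ) (ω : ℕ → α) => ω i) M :=
      iIndepFun_infinitePi (P := fun _ : ℕ => μ) (X := fun _ => id) fun _ => measurable_id
    have hp := (iIndepFun_iff_map_fun_eq_pi_map (fun t : Fin n =>
      (heval t).measurable.aemeasurable)).1 (hid.precomp Fin.val_injective)
    refine hp.trans ?_
    congr 1
    ext1 t
    exact (heval t).map_eq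
  rw [← hrestr.lintegral_comp (by fun_prop), eLpNorm_one_eq_lintegral_enorm]
  refine lintegral_congr fun ω => ?_
  rw [hmean, ← ofReal_norm, Real.norm_eq_abs, abs_sub_comm, one_div, smul_eq_mul,
    Finset.sum_range]

/-- A memoryless deterministic design, given by one-shot strategies at every time. -/
def memorylessDesign {n : ℕ} (f g : Fin n → ℝ → ℝ) (hf : ∀ t, Measurable (f t))
    (hg : ∀ t, Measurable (g t)) : Design n where
  enc t x _ := f t (x t)
  dec t y _ := g t (y t)
  enc_meas t := by have := hf t; fun_prop
  dec_meas t := by have := hg t; fun_prop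
  enc_causal t x x' _ h := by rw [h t le_rfl]
  dec_causal t y y' _ h := by rw [h t le_rfl]

/-- Time sharing: the expected costs of any random choice of a deterministic one-shot strategy
are achievable. -/
theorem achievable_of_mixture {Θ : Type*} [MeasurableSpace Θ] (ν : Measure Θ)
    [IsProbabilityMeasure ν] (Q N : ℝ≥0) {f g : Θ → ℝ → ℝ}
    (hf : Measurable fun p : Θ × ℝ => f p.1 p.2) (hg : Measurable fun p : Θ × ℝ => g p.1 p.2)
    (hP : Integrable (fun p : Θ × ℝ × ℝ => f p.1 p.2.1 ^ 2)
      (ν.prod ((gaussianReal 0 Q).prod (gaussianReal 0 N))))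
    (hS : Integrable (fun p : Θ × ℝ × ℝ =>
        (p.2.1 + f p.1 p.2.1 - g p.1 (p.2.1 + f p.1 p.2.1 + p.2.2)) ^ 2)
      (ν.prod ((gaussianReal 0 Q).prod (gaussianReal 0 N)))) :
    achievable Q N
      (∫ p : Θ × ℝ × ℝ, f p.1 p.2.1 ^ 2
        ∂(ν.prod ((gaussianReal 0 Q).prod (gaussianReal 0 N))))
      (∫ p : Θ × ℝ × ℝ, (p.2.1 + f p.1 p.2.1 - g p.1 (p.2.1 + f p.1 p.2.1 + p.2.2)) ^ 2
        ∂(ν.prod ((gaussianReal 0 Q).prod (gaussianReal 0 N)))) := by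
  set μ := ν.prod ((gaussianReal 0 Q).prod (gaussianReal 0 N))
  have hf' : Measurable fun p : Θ × ℝ × ℝ => f p.1 p.2.1 :=
    hf.comp (measurable_fst.prodMk measurable_snd.fst)
  have hg' : Measurable fun p : Θ × ℝ × ℝ => g p.1 (p.2.1 + f p.1 p.2.1 + p.2.2) :=
    hg.comp (measurable_fst.prodMk ((measurable_snd.fst.add hf').add measurable_snd.snd))
  set F : Θ × ℝ × ℝ → ℝ := fun p => f p.1 p.2.1 ^ 2
  set G : Θ × ℝ × ℝ → ℝ :=
    fun p => (p.2.1 + f p.1 p.2.1 - g p.1 (p.2.1 + f p.1 p.2.1 + p.2.2)) ^ 2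
  have hFm : Measurable F := hf'.pow_const 2
  have hGm : Measurable G := ((measurable_snd.fst.add hf').sub hg').pow_const 2
  intro ε hε
  have hlim := (tendsto_lintegral_abs_integral_sub_average μ hFm hP).add
    (tendsto_lintegral_abs_integral_sub_average μ hGm hS)
  rw [add_zero] at hlim
  obtain ⟨n₀, hn₀⟩ := Filter.eventually_atTop.1
    (hlim.eventually (gt_mem_nhds (ENNReal.ofReal_pos.2 hε)))
  refine ⟨n₀, fun n hn => ?_⟩
  specialize hn₀ n hn
  set H : (Fin n → Θ) × Path n × Path n → ℝ≥0∞ := fun q =>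
    ENNReal.ofReal (|∫ a, F a ∂μ - (1 / (n : ℝ)) * ∑ t, F (q.1 t, q.2.1 t, q.2.2 t)| +
      |∫ a, G a ∂μ - (1 / (n : ℝ)) * ∑ t, G (q.1 t, q.2.1 t, q.2.2 t)|)
  have hHm : Measurable H := by fun_prop
  have hmp : MeasurePreserving
      (fun ω : Fin n → Θ × ℝ × ℝ => ((fun t => (ω t).1), (fun t => (ω t).2.1),
        (fun t => (ω t).2.2)))
      (Measure.pi fun _ => μ)
      ((Measure.pi fun _ => ν).prod ((iidGaussian n Q).prod (iidGaussian n N))) :=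
    ((MeasurePreserving.id _).prod (measurePreserving_arrowProdEquivProdArrow ℝ ℝ (Fin n)
      (fun _ => gaussianReal 0 Q) (fun _ => gaussianReal 0 N))).comp
      (measurePreserving_arrowProdEquivProdArrow Θ (ℝ × ℝ) (Fin n) (fun _ => ν)
        (fun _ => (gaussianReal 0 Q).prod (gaussianReal 0 N)))
  have hint : ∫⁻ q, H q ∂((Measure.pi fun _ => ν).prod
      ((iidGaussian n Q).prod (iidGaussian n N))) < ENNReal.ofReal ε := by
    rw [← hmp.lintegral_comp hHm]
    refine lt_of_eq_of_lt ?_ hn₀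
    rw [← lintegral_add_left (by fun_prop)]
    exact lintegral_congr fun ω => ENNReal.ofReal_add (abs_nonneg _) (abs_nonneg _)
  rw [lintegral_prod _ hHm.aemeasurable] at hint
  obtain ⟨θ, hθ⟩ := exists_le_lintegral (μ := Measure.pi fun _ : Fin n => ν)
    (hHm.lintegral_prod_right' (ν := (iidGaussian n Q).prod (iidGaussian n N))).aemeasurable
  refine ⟨memorylessDesign (fun t => f (θ t)) (fun t => g (θ t))
    (fun t => hf.comp measurable_prodMk_left) (fun t => hg.comp measurable_prodMk_left), ?_⟩
  refine le_trans (le_of_eq ?_) (hθ.trans hint.le)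
  have hproj : MeasurePreserving (fun ω : Sample n => (ω.1, ω.2.1)) (base n Q N)
      ((iidGaussian n Q).prod (iidGaussian n N)) :=
    (MeasurePreserving.id _).prod measurePreserving_fst
  rw [← hproj.lintegral_comp (by fun_prop)]
  rfl

/-- The set of achievable pairs is closed. -/
theorem achievable_of_approx {Q N : ℝ≥0} {P S : ℝ}
    (h : ∀ ε > (0 : ℝ), ∃ P' S', |P - P'| + |S - S'| ≤ ε ∧ achievable Q N P' S') :
    achievable Q N P S := by
  intro ε hε
  obtain ⟨P', S', hclose, hach⟩ := h (ε / 2) (half_pos hε)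
  obtain ⟨n₀, hn₀⟩ := hach (ε / 2) (half_pos hε)
  refine ⟨n₀, fun n hn => ?_⟩
  obtain ⟨c, hc⟩ := hn₀ n hn
  refine ⟨c, ?_⟩
  calc _ ≤ ∫⁻ ω, (ENNReal.ofReal (ε / 2) + ENNReal.ofReal
        (|P' - costP (c.U1 ω)| + |S' - costS (c.X1 ω) (c.U2 ω)|)) ∂(base n Q N) := by
        refine lintegral_mono fun ω => ?_
        rw [← ENNReal.ofReal_add (by positivity) (by positivity)]
        refine ENNReal.ofReal_le_ofReal ?_
        have h₁ := abs_sub_le P P' (costP (c.U1 ω))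
        have h₂ := abs_sub_le S S' (costS (c.X1 ω) (c.U2 ω))
        linarith
    _ = ENNReal.ofReal (ε / 2) + ∫⁻ ω, ENNReal.ofReal
        (|P' - costP (c.U1 ω)| + |S' - costS (c.X1 ω) (c.U2 ω)|) ∂(base n Q N) := by
        rw [lintegral_add_left measurable_const, lintegral_const, measure_univ, mul_one]
    _ ≤ ENNReal.ofReal (ε / 2) + ENNReal.ofReal (ε / 2) := by gcongr
    _ = ENNReal.ofReal ε := by
        rw [← ENNReal.ofReal_add (by positivity) (by positivity), add_halves]

theorem achievableFB_of_achievable {Q N : ℝ≥0} {P S : ℝ} (h : achievable Q N P S) :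
    achievableFB Q N P S := by
  intro ε hε
  obtain ⟨n₀, hn₀⟩ := h ε hε
  refine ⟨n₀, fun n hn => ?_⟩
  obtain ⟨c, hc⟩ := hn₀ n hn
  let c' : FBDesign n :=
    { enc := fun t x _ v => c.enc t x v
      dec := c.dec
      enc_meas := fun t => (c.enc_meas t).comp (measurable_fst.fst.prodMk measurable_snd)
      dec_meas := c.dec_meas
      enc_causal := fun t x x' _ _ v hx _ => c.enc_causal t x x' v hx
      dec_causal := c.dec_causal }
  have hU : c'.U1 = c.U1 := by
    ext ω t
    simp [FBDesign.U1, Design.U1, c', fbCtrl]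
  have hX : c'.X1 = c.X1 := by
    ext ω t
    simp [FBDesign.X1, Design.X1, hU]
  have hU2 : c'.U2 = c.U2 := by
    ext ω t
    have hY : c'.Y1 ω = c.Y1 ω := by
      ext s
      simp only [FBDesign.Y1, Design.Y1, hX]
    simp only [FBDesign.U2, Design.U2, hY]
    rfl
  exact ⟨c', by rwa [hU, hX, hU2]⟩

theorem fbCtrl_congr {n : ℕ} (c : FBDesign n) {x x' z z' v : Path n} (t : ℕ)
    (hx : ∀ s : Fin n, (s : ℕ) ≤ t → x s = x' s) (hz : ∀ s : Fin n, (s : ℕ) < t → z s = z' s) :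
    fbCtrl c.enc x z v t = fbCtrl c.enc x' z' v t := by
  induction t using Nat.strong_induction_on with
  | _ t ih =>
    rw [fbCtrl, fbCtrl]
    split_ifs with ht
    · refine c.enc_causal _ _ _ _ _ _ (fun s hs => hx s hs) fun s hs => ?_
      have hs' : (s : ℕ) < t := hs
      simp only [hs', dif_pos]
      rw [hx s hs'.le, hz s hs', ih s hs' (fun r hr => hx r (hr.trans hs'.le))
        (fun r hr => hz r (hr.trans hs'))]
    · rfl

theorem measurable_fbCtrl {n : ℕ} (c : FBDesign n) (t : ℕ) :
    Measurable fun ω : Sample n => fbCtrl c.enc (srcX0 ω) (noiseZ ω) (seedV ω) t := by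
  induction t using Nat.strong_induction_on with
  | _ t ih =>
    by_cases ht : t < n
    · have hfun : (fun ω : Sample n => fbCtrl c.enc (srcX0 ω) (noiseZ ω) (seedV ω) t) =
          fun ω => c.enc ⟨t, ht⟩ ω.1 (fun s : Fin n => if (s : ℕ) < t then
            ω.1 s + fbCtrl c.enc (srcX0 ω) (noiseZ ω) (seedV ω) s + ω.2.1 s else 0)
            (ω.2.2.1 ⟨t, ht⟩) := by
        ext ω
        rw [fbCtrl, dif_pos ht]
        rfl
      rw [hfun]
      have hpre : Measurable fun (ω : Sample n) (s : Fin n) => if (s : ℕ) < t then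
          ω.1 s + fbCtrl c.enc (srcX0 ω) (noiseZ ω) (seedV ω) s + ω.2.1 s else 0 := ?_
      · exact (c.enc_meas ⟨t, ht⟩).comp ((measurable_fst.prodMk hpre).prodMk (by fun_prop))
      refine measurable_pi_iff.2 fun s => ?_
      by_cases hs : (s : ℕ) < t
      · have := ih s hs
        simp only [if_pos hs]
        fun_prop
      · simp only [if_neg hs]
        fun_prop
    · have hfun : (fun ω : Sample n => fbCtrl c.enc (srcX0 ω) (noiseZ ω) (seedV ω) t) =
          fun _ => 0 := by
        ext ω
        rw [fbCtrl, dif_neg ht]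
      rw [hfun]
      exact measurable_const

namespace FBDesign

variable {n : ℕ} (c : FBDesign n)

theorem measurable_U1 : Measurable c.U1 :=
  measurable_pi_iff.2 fun t => measurable_fbCtrl c t

theorem measurable_X1 : Measurable c.X1 :=
  measurable_pi_iff.2 fun t =>
    ((measurable_pi_apply t).comp measurable_fst).add (measurable_fbCtrl c t)

theorem measurable_Y1 : Measurable c.Y1 :=
  measurable_pi_iff.2 fun t => ((measurable_pi_apply t).comp c.measurable_X1).add
    ((measurable_pi_apply t).comp measurable_snd.fst)

theorem measurable_U2 : Measurable c.U2 :=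
  measurable_pi_iff.2 fun t => (c.dec_meas t).comp
    (c.measurable_Y1.prodMk ((measurable_pi_apply t).comp measurable_snd.snd.snd))

end FBDesign

/-- Replace the source and noise values at time `t`. -/
def resample {n : ℕ} (t : Fin n) (q : Sample n × ℝ × ℝ) : Sample n :=
  (Function.update q.1.1 t q.2.1, Function.update q.1.2.1 t q.2.2, q.1.2.2)

/-- Resampling one coordinate of a product measure independently preserves the measure. -/
theorem measurePreserving_update {ι : Type*} [Fintype ι] [DecidableEq ι] {α : ι → Type*}
    [∀ i, MeasurableSpace (α i)] (μ : ∀ i, Measure (α i)) [∀ i, IsProbabilityMeasure (μ i)]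
    (i : ι) :
    MeasurePreserving (fun p : (∀ i, α i) × α i => Function.update p.1 i p.2)
      ((Measure.pi μ).prod (μ i)) (Measure.pi μ) := by
  have hm : Measurable fun p : (∀ i, α i) × α i => Function.update p.1 i p.2 :=
    measurable_update'
  refine ⟨hm, (Measure.pi_eq fun s hs => ?_).symm⟩
  rw [Measure.map_apply hm (.univ_pi hs)]
  have hpre : (fun p : (∀ i, α i) × α i => Function.update p.1 i p.2) ⁻¹' Set.univ.pi s =
      (Set.univ.pi (Function.update s i Set.univ)) ×ˢ s i := by
    ext ⟨x, a⟩
    simp only [Set.mem_preimage, Set.mem_univ_pi, Set.mem_prod]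
    constructor
    · intro h
      refine ⟨fun j => ?_, by simpa using h i⟩
      rcases eq_or_ne j i with rfl | hj
      · simp
      · simpa [hj] using h j
    · rintro ⟨h, ha⟩ j
      rcases eq_or_ne j i with rfl | hj
      · simpa using ha
      · simpa [hj] using h j
  rw [hpre, Measure.prod_prod, Measure.pi_pi,
    ← Finset.mul_prod_erase Finset.univ (fun j => μ j (s j)) (Finset.mem_univ i),
    ← Finset.mul_prod_erase Finset.univ _ (Finset.mem_univ i), Function.update_self,
    measure_univ, one_mul, mul_comm]
  congr 1
  refine Finset.prod_congr rfl fun j hj => ?_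
  rw [Function.update_of_ne (Finset.ne_of_mem_erase hj)]

theorem measurePreserving_prod_right_comm {α β γ : Type*} [MeasurableSpace α]
    [MeasurableSpace β] [MeasurableSpace γ] (μ : Measure α) (ν : Measure β) (ρ : Measure γ)
    [SFinite μ] [SFinite ν] [SFinite ρ] :
    MeasurePreserving (fun p : (α × β) × γ => ((p.1.1, p.2), p.1.2))
      ((μ.prod ν).prod ρ) ((μ.prod ρ).prod ν) :=
  ((measurePreserving_prodAssoc μ ρ ν).symm _).comp
    (((MeasurePreserving.id μ).prod Measure.measurePreserving_swap).comp
      (measurePreserving_prodAssoc μ ν ρ))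

theorem measurePreserving_prod_prod_comm {α β γ δ : Type*} [MeasurableSpace α]
    [MeasurableSpace β] [MeasurableSpace γ] [MeasurableSpace δ] (μ : Measure α) (ν : Measure β)
    (ρ : Measure γ) (τ : Measure δ) [SFinite μ] [SFinite ν] [SFinite ρ] [SFinite τ] :
    MeasurePreserving (fun p : (α × β) × γ × δ => ((p.1.1, p.2.1), (p.1.2, p.2.2)))
      ((μ.prod ν).prod (ρ.prod τ)) ((μ.prod ρ).prod (ν.prod τ)) :=
  (measurePreserving_prodAssoc (μ.prod ρ) ν τ).comp
    (((measurePreserving_prod_right_comm μ ν ρ).prod (MeasurePreserving.id τ)).comp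
      ((measurePreserving_prodAssoc (μ.prod ν) ρ τ).symm _))

theorem measurePreserving_resample {n : ℕ} (Q N : ℝ≥0) (t : Fin n) :
    MeasurePreserving (resample t)
      ((base n Q N).prod ((gaussianReal 0 Q).prod (gaussianReal 0 N))) (base n Q N) := by
  have hX := measurePreserving_update (fun _ : Fin n => gaussianReal 0 Q) t
  have hZ := measurePreserving_update (fun _ : Fin n => gaussianReal 0 N) t
  have hZ' := hZ.prod (MeasurePreserving.id ((iidGaussian n 1).prod (iidGaussian n 1)))
  exact (hX.prod (hZ'.comp (measurePreserving_prod_right_comm _ _ _))).comp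
    (measurePreserving_prod_prod_comm _ _ _ _)

/-- The uniform distribution on the times of a block. -/
def uniformTime (m : ℕ) : Measure (Fin m) := (m : ℝ≥0∞)⁻¹ • Measure.count

theorem isProbabilityMeasure_uniformTime {m : ℕ} (hm : m ≠ 0) :
    IsProbabilityMeasure (uniformTime m) := by
  refine ⟨?_⟩
  simp [uniformTime, ENNReal.inv_mul_cancel, hm]

theorem integral_uniformTime {m : ℕ} (h : Fin m → ℝ) :
    ∫ t, h t ∂(uniformTime m) = (1 / (m : ℝ)) * ∑ t, h t := by
  simp [uniformTime, integral_smul_measure, integral_count]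

/-- Averaging over a uniformly chosen time turns a nonnegative long-run cost into the
expectation of its per-time cost. -/
theorem integrable_and_integral_uniformTime {m : ℕ} (hm : m ≠ 0) {Ω : Type*} [MeasurableSpace Ω]
    (μ : Measure Ω) [IsProbabilityMeasure μ] {h : Fin m → Ω → ℝ} (hmeas : ∀ t, Measurable (h t))
    (hnonneg : ∀ t ω, 0 ≤ h t ω) (hint : Integrable (fun ω => (1 / (m : ℝ)) * ∑ t, h t ω) μ) :
    Integrable (fun p : Fin m × Ω => h p.1 p.2) ((uniformTime m).prod μ) ∧
      ∫ p, h p.1 p.2 ∂((uniformTime m).prod μ) = ∫ ω, (1 / (m : ℝ)) * ∑ t, h t ω ∂μ := by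
  have := isProbabilityMeasure_uniformTime hm
  have hm' : (0 : ℝ) < m := by positivity
  have hmeas' : Measurable fun p : Fin m × Ω => h p.1 p.2 :=
    measurable_from_prod_countable_right hmeas
  have hI : Integrable (fun p : Fin m × Ω => h p.1 p.2) ((uniformTime m).prod μ) := by
    rw [integrable_prod_iff hmeas'.aestronglyMeasurable]
    refine ⟨.of_forall fun t => ?_, .of_finite⟩
    refine (hint.const_mul (m : ℝ)).mono' (hmeas t).aestronglyMeasurable (.of_forall fun ω => ?_)
    rw [Real.norm_of_nonneg (hnonneg t ω), ← mul_assoc, mul_one_div_cancel hm'.ne', one_mul]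
    exact Finset.single_le_sum (f := fun t => h t ω) (fun s _ => hnonneg s ω) (Finset.mem_univ t)
  refine ⟨hI, ?_⟩
  rw [integral_prod_symm _ hI]
  simp only [integral_uniformTime]

namespace FBDesign

variable {n : ℕ} (c : FBDesign n)

/-- The encoder at time `t` as a one-shot strategy, all randomness but that of time `t` being
frozen. -/
def oneShotEnc (θ : Fin n × Sample n) (a : ℝ) : ℝ := c.U1 (resample θ.1 (θ.2, a, 0)) θ.1

/-- The decoder at time `t` as a one-shot strategy, all randomness but that of time `t` being
frozen. -/
def oneShotDec (θ : Fin n × Sample n) (y : ℝ) : ℝ :=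
  c.dec θ.1 (Function.update (c.Y1 θ.2) θ.1 y) (seedW θ.2 θ.1)

theorem U1_resample (t : Fin n) (ω : Sample n) (a b : ℝ) :
    c.U1 (resample t (ω, a, b)) t = c.oneShotEnc (t, ω) a := by
  refine fbCtrl_congr c t (fun s _ => rfl) fun s hs => ?_
  have hne : s ≠ t := Fin.ne_of_lt hs
  simp [noiseZ, resample, hne]

theorem X1_resample (t : Fin n) (ω : Sample n) (a b : ℝ) :
    c.X1 (resample t (ω, a, b)) t = a + c.oneShotEnc (t, ω) a := by
  rw [X1, U1_resample]
  simp [srcX0, resample]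

theorem U2_resample (t : Fin n) (ω : Sample n) (a b : ℝ) :
    c.U2 (resample t (ω, a, b)) t =
      c.oneShotDec (t, ω) (a + c.oneShotEnc (t, ω) a + b) := by
  refine c.dec_causal t _ _ _ fun s hs => ?_
  rcases hs.eq_or_lt with rfl | hs
  · rw [Y1, X1_resample]
    simp [noiseZ, resample]
  · have hx (r : Fin n) (hr : (r : ℕ) ≤ s) : srcX0 (resample t (ω, a, b)) r = srcX0 ω r := by
      have hne : r ≠ t := Fin.ne_of_lt (lt_of_le_of_lt (Fin.le_def.2 hr) hs)
      simp [srcX0, resample, hne]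
    have hz (r : Fin n) (hr : (r : ℕ) ≤ s) : noiseZ (resample t (ω, a, b)) r = noiseZ ω r := by
      have hne : r ≠ t := Fin.ne_of_lt (lt_of_le_of_lt (Fin.le_def.2 hr) hs)
      simp [noiseZ, resample, hne]
    have hu : c.U1 (resample t (ω, a, b)) s = c.U1 ω s :=
      fbCtrl_congr c s hx fun r hr => hz r hr.le
    simp only [Function.update_of_ne (Fin.ne_of_lt hs), Y1, X1, hx s le_rfl, hz s le_rfl, hu]

theorem measurable_oneShotEnc :
    Measurable fun p : (Fin n × Sample n) × ℝ => c.oneShotEnc p.1 p.2 := by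
  have h : Measurable fun q : Fin n × Sample n × ℝ => c.oneShotEnc (q.1, q.2.1) q.2.2 := by
    refine measurable_from_prod_countable_right fun t => ?_
    have hr : Measurable (resample t) := (measurePreserving_resample 1 1 t).measurable
    exact (measurable_pi_apply t).comp (c.measurable_U1.comp (hr.comp
      (measurable_fst.prodMk (measurable_snd.prodMk measurable_const))))
  exact h.comp MeasurableEquiv.prodAssoc.measurable

theorem measurable_oneShotDec :
    Measurable fun p : (Fin n × Sample n) × ℝ => c.oneShotDec p.1 p.2 := by
  have h : Measurable fun q : Fin n × Sample n × ℝ => c.oneShotDec (q.1, q.2.1) q.2.2 := by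
    refine measurable_from_prod_countable_right fun t => ?_
    exact (c.dec_meas t).comp ((measurable_update'.comp
      ((c.measurable_Y1.comp measurable_fst).prodMk measurable_snd)).prodMk
      ((measurable_pi_apply t).comp measurable_fst.snd.snd.snd))
  exact h.comp MeasurableEquiv.prodAssoc.measurable

theorem measurable_costP_U1 : Measurable fun ω => costP (c.U1 ω) := by
  have := c.measurable_U1
  unfold costP
  fun_prop

theorem measurable_costS_X1_U2 : Measurable fun ω => costS (c.X1 ω) (c.U2 ω) := by
  have := c.measurable_X1
  have := c.measurable_U2
  unfold costS
  fun_prop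

/-- The expected costs of a feedback design are achievable without feedback. -/
theorem achievable_expected_costs (hn : n ≠ 0) (Q N : ℝ≥0)
    (hP : Integrable (fun ω => costP (c.U1 ω)) (base n Q N))
    (hS : Integrable (fun ω => costS (c.X1 ω) (c.U2 ω)) (base n Q N)) :
    achievable Q N (∫ ω, costP (c.U1 ω) ∂(base n Q N))
      (∫ ω, costS (c.X1 ω) (c.U2 ω) ∂(base n Q N)) := by
  have := isProbabilityMeasure_uniformTime hn
  have hU1 (t : Fin n) : Measurable fun ω => c.U1 ω t :=
    (measurable_pi_apply t).comp c.measurable_U1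
  have hX1 (t : Fin n) : Measurable fun ω => c.X1 ω t :=
    (measurable_pi_apply t).comp c.measurable_X1
  have hU2 (t : Fin n) : Measurable fun ω => c.U2 ω t :=
    (measurable_pi_apply t).comp c.measurable_U2
  have hAm (t : Fin n) : Measurable fun ω => c.U1 ω t ^ 2 := (hU1 t).pow_const 2
  have hBm (t : Fin n) : Measurable fun ω => (c.X1 ω t - c.U2 ω t) ^ 2 :=
    ((hX1 t).sub (hU2 t)).pow_const 2
  obtain ⟨hA, hA'⟩ := integrable_and_integral_uniformTime hn (base n Q N) hAm
    (fun _ _ => sq_nonneg _) hP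
  obtain ⟨hB, hB'⟩ := integrable_and_integral_uniformTime hn (base n Q N) hBm
    (fun _ _ => sq_nonneg _) hS
  have hres : Measurable (Function.uncurry (resample (n := n))) :=
    measurable_from_prod_countable_right fun t => (measurePreserving_resample 1 1 t).measurable
  have hΦ : MeasurePreserving
      (fun p : (Fin n × Sample n) × ℝ × ℝ => (p.1.1, resample p.1.1 (p.1.2, p.2)))
      (((uniformTime n).prod (base n Q N)).prod ((gaussianReal 0 Q).prod (gaussianReal 0 N)))
      ((uniformTime n).prod (base n Q N)) :=
    ((MeasurePreserving.id _).skew_product (g := resample) hres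
      (.of_forall fun t => (measurePreserving_resample Q N t).map_eq)).comp
      (measurePreserving_prodAssoc _ _ _)
  have eA : (fun p : (Fin n × Sample n) × ℝ × ℝ => c.oneShotEnc p.1 p.2.1 ^ 2) =
      (fun q : Fin n × Sample n => c.U1 q.2 q.1 ^ 2) ∘
        fun p => (p.1.1, resample p.1.1 (p.1.2, p.2)) := by
    ext ⟨⟨t, ω⟩, a, b⟩
    simp only [Function.comp_apply, U1_resample]
  have eB : (fun p : (Fin n × Sample n) × ℝ × ℝ => (p.2.1 + c.oneShotEnc p.1 p.2.1 -
        c.oneShotDec p.1 (p.2.1 + c.oneShotEnc p.1 p.2.1 + p.2.2)) ^ 2) =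
      (fun q : Fin n × Sample n => (c.X1 q.2 q.1 - c.U2 q.2 q.1) ^ 2) ∘
        fun p => (p.1.1, resample p.1.1 (p.1.2, p.2)) := by
    ext ⟨⟨t, ω⟩, a, b⟩
    simp only [Function.comp_apply, X1_resample, U2_resample]
  have key := achievable_of_mixture ((uniformTime n).prod (base n Q N)) Q N
    c.measurable_oneShotEnc c.measurable_oneShotDec
    (by rw [eA]; exact hΦ.integrable_comp_of_integrable hA)
    (by rw [eB]; exact hΦ.integrable_comp_of_integrable hB)
  rw [eA, eB] at key
  have hiA := integral_map hΦ.measurable.aemeasurable (hΦ.map_eq.symm ▸ hA.aestronglyMeasurable)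
  have hiB := integral_map hΦ.measurable.aemeasurable (hΦ.map_eq.symm ▸ hB.aestronglyMeasurable)
  rw [hΦ.map_eq] at hiA hiB
  rw [show ∫ ω, costP (c.U1 ω) ∂(base n Q N) = _ from hA'.symm.trans hiA,
    show ∫ ω, costS (c.X1 ω) (c.U2 ω) ∂(base n Q N) = _ from hB'.symm.trans hiB]
  exact key

end FBDesign

/-- A finite `L¹` deviation from constants bounds the deviation of the means. -/
theorem integrable_and_abs_sub_integral_le {Ω : Type*} [MeasurableSpace Ω] (μ : Measure Ω)
    [IsProbabilityMeasure μ] {h : Ω → ℝ} (hm : Measurable h) {p ε : ℝ} (hε : 0 ≤ ε)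
    (hd : ∫⁻ ω, ENNReal.ofReal |p - h ω| ∂μ ≤ ENNReal.ofReal ε) :
    Integrable h μ ∧ |p - ∫ ω, h ω ∂μ| ≤ ε := by
  have hi : Integrable (fun ω => p - h ω) μ := by
    refine ⟨(measurable_const.sub hm).aestronglyMeasurable, ?_⟩
    rw [hasFiniteIntegral_iff_norm]
    exact hd.trans_lt ENNReal.ofReal_lt_top
  have hh : Integrable h μ := by
    simpa [Pi.sub_def] using (integrable_const p).sub hi
  refine ⟨hh, ?_⟩
  have hsub : p - ∫ ω, h ω ∂μ = ∫ ω, (p - h ω) ∂μ := by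
    rw [integral_sub (integrable_const p) hh]
    simp
  rw [hsub]
  refine abs_integral_le_integral_abs.trans ?_
  rw [integral_eq_lintegral_of_nonneg_ae (.of_forall fun _ => abs_nonneg _)
    hi.abs.aestronglyMeasurable]
  exact ENNReal.toReal_le_of_le_ofReal hε hd

theorem achievable_of_achievableFB {Q N : ℝ≥0} {P S : ℝ} (h : achievableFB Q N P S) :
    achievable Q N P S := by
  refine achievable_of_approx fun ε hε => ?_
  obtain ⟨n₀, hn₀⟩ := h (ε / 2) (half_pos hε)
  obtain ⟨c, hc⟩ := hn₀ (n₀ + 1) (Nat.le_succ n₀)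
  obtain ⟨hP, hP'⟩ := integrable_and_abs_sub_integral_le (base (n₀ + 1) Q N)
    c.measurable_costP_U1 (p := P) (half_pos hε).le (le_trans (lintegral_mono fun ω =>
      ENNReal.ofReal_le_ofReal (le_add_of_nonneg_right (abs_nonneg _))) hc)
  obtain ⟨hS, hS'⟩ := integrable_and_abs_sub_integral_le (base (n₀ + 1) Q N)
    c.measurable_costS_X1_U2 (p := S) (half_pos hε).le (le_trans (lintegral_mono fun ω =>
      ENNReal.ofReal_le_ofReal (le_add_of_nonneg_left (abs_nonneg _))) hc)
  exact ⟨_, _, by linarith, c.achievable_expected_costs n₀.succ_ne_zero Q N hP hS⟩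

/-- **Theorem 2** (channel feedback does not help when both decision makers are causal):
a pair of costs is achievable with causal encoding with strictly causal channel feedback and
causal decoding if and only if it is achievable with causal encoding (no feedback) and causal
decoding, i.e. `R_{ed,f} = R_ed`. -/
theorem feedback_region_eq (Q N : ℝ≥0) (hQ : 0 < Q) (hN : 0 < N) (P S : ℝ) :
    achievableFB Q N P S ↔ achievable Q N P S :=
  ⟨achievable_of_achievableFB, achievableFB_of_achievable⟩

end

end Witsenhausen
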